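/- arXiv:0705.0946 — 2 statements merged into one kernel-verified Lean document; each statement's English description precedes it below -/
import Mathlib

section
/- If posets X and Y are universally derived equivalent, then the opposite posets X^op and Y^op are universally derived equivalent. -/
open CategoryTheory

universe u v w

/-- Two posets are universally derived equivalent if for every abelian category `A`,
the derived categories of diagram categories `D(A^P)` and `D(A^Q)` are equivalent
as triangulated categories. -/
def UniversallyDerivedEquivalent (P Q : Type*) [PartialOrder P] [PartialOrder Q] : Prop :=
  ∀ (A : Type u) (_ : Category.{v} A) (_ : Abelian A)
    (_ : HasDerivedCategory.{w} (P ⥤ A)) (_ : HasDerivedCategory.{w} (Q ⥤ A)),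
    ∃ (e : DerivedCategory (P ⥤ A) ≌ DerivedCategory (Q ⥤ A))
      (c : e.functor.CommShift ℤ), letI := c; e.functor.IsTriangulated

set_option linter.style.haveILetI false
set_option linter.unusedSectionVars false

noncomputable section

open CategoryTheory Limits Pretriangulated Opposite
open scoped CategoryTheory.Pretriangulated.Opposite

namespace UDEOp

/-- Existence of a triangulated equivalence. -/
def TE (D₁ : Type*) (D₂ : Type*) [Category* D₁] [Category* D₂] [HasShift D₁ ℤ] [HasShift D₂ ℤ]
    [HasZeroObject D₁] [HasZeroObject D₂] [Preadditive D₁] [Preadditive D₂]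
    [∀ n : ℤ, (shiftFunctor D₁ n).Additive] [∀ n : ℤ, (shiftFunctor D₂ n).Additive]
    [Pretriangulated D₁] [Pretriangulated D₂] : Prop :=
  ∃ (e : D₁ ≌ D₂) (c : e.functor.CommShift ℤ), letI := c; e.functor.IsTriangulated

section
variable {D₁ : Type*} {D₂ : Type*} {D₃ : Type*} [Category* D₁] [Category* D₂] [Category* D₃]
    [HasShift D₁ ℤ] [HasShift D₂ ℤ] [HasShift D₃ ℤ]
    [HasZeroObject D₁] [HasZeroObject D₂] [HasZeroObject D₃]
    [Preadditive D₁] [Preadditive D₂] [Preadditive D₃]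
    [∀ n : ℤ, (shiftFunctor D₁ n).Additive] [∀ n : ℤ, (shiftFunctor D₂ n).Additive]
    [∀ n : ℤ, (shiftFunctor D₃ n).Additive]
    [Pretriangulated D₁] [Pretriangulated D₂] [Pretriangulated D₃]

lemma TE.trans (h : TE D₁ D₂) (h' : TE D₂ D₃) : TE D₁ D₃ := by
  obtain ⟨e, c, t⟩ := h
  obtain ⟨e', c', t'⟩ := h'
  letI := c
  letI := c'
  haveI : e.functor.IsTriangulated := t
  haveI : e'.functor.IsTriangulated := t'
  exact ⟨e.trans e', inferInstanceAs ((e.functor ⋙ e'.functor).CommShift ℤ),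
    inferInstanceAs ((e.functor ⋙ e'.functor).IsTriangulated)⟩

lemma TE.symm (h : TE D₁ D₂) : TE D₂ D₁ := by
  obtain ⟨e, c, t⟩ := h
  letI := c
  haveI : e.functor.IsTriangulated := t
  let ci : e.inverse.CommShift ℤ := e.commShiftInverse ℤ
  haveI := e.commShift_of_functor ℤ
  haveI := Equivalence.IsTriangulated.mk' e t
  have ti : e.inverse.IsTriangulated := inferInstance
  exact ⟨e.symm, ci, ti⟩

lemma TE.op (h : TE D₁ D₂) : TE D₁ᵒᵖ D₂ᵒᵖ := by
  obtain ⟨e, c, t⟩ := h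
  letI := c
  haveI : e.functor.IsTriangulated := t
  exact ⟨e.op, inferInstanceAs (e.functor.op.CommShift ℤ),
    inferInstanceAs (e.functor.op.IsTriangulated)⟩

variable (D₁) in
lemma TE.opOp : TE D₁ᵒᵖᵒᵖ D₁ :=
  ⟨opOpEquivalence D₁, inferInstance, inferInstance⟩

lemma TE.of_op (h : TE D₁ᵒᵖ D₂ᵒᵖ) : TE D₁ D₂ :=
  ((TE.opOp D₁).symm.trans h.op).trans (TE.opOp D₂)

end

section
variable {C : Type*} {D : Type*} [Category* C] [Category* D] [Abelian C] [Abelian D]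

/-- An exact functor as a localizer morphism. -/
def mapLM (F : C ⥤ D) [F.Additive] [PreservesFiniteLimits F] [PreservesFiniteColimits F] :
    LocalizerMorphism (HomologicalComplex.quasiIso C (ComplexShape.up ℤ))
      (HomologicalComplex.quasiIso D (ComplexShape.up ℤ)) where
  functor := F.mapHomologicalComplex _
  map := by
    intro K L f hf
    simp only [MorphismProperty.inverseImage_iff, HomologicalComplex.mem_quasiIso_iff] at hf ⊢
    infer_instance

lemma quasiIso_le_map (F : C ⥤ D) [F.Additive] [PreservesFiniteLimits F]
    [PreservesFiniteColimits F] [F.IsEquivalence]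
    [(F.mapHomologicalComplex (ComplexShape.up ℤ)).IsEquivalence] :
    HomologicalComplex.quasiIso D (ComplexShape.up ℤ) ≤
      (HomologicalComplex.quasiIso C (ComplexShape.up ℤ)).map
        (F.mapHomologicalComplex (ComplexShape.up ℤ)) := by
  have h : HomologicalComplex.quasiIso C (ComplexShape.up ℤ) =
      (HomologicalComplex.quasiIso D (ComplexShape.up ℤ)).inverseImage
        (F.mapHomologicalComplex (ComplexShape.up ℤ)) := by
    ext K L f
    simp only [MorphismProperty.inverseImage_iff, HomologicalComplex.mem_quasiIso_iff]
    exact (HomologicalComplex.quasiIso_map_iff_of_preservesHomology f F).symm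
  rw [h, MorphismProperty.map_inverseImage_eq_of_isEquivalence]

lemma TE.mapDerived [HasDerivedCategory C] [HasDerivedCategory D] (E : C ≌ D) : TE (DerivedCategory C) (DerivedCategory D) := by
  haveI : PreservesBinaryBiproducts E.functor :=
    preservesBinaryBiproducts_of_preservesBinaryProducts _
  haveI : E.functor.Additive := Functor.additive_of_preservesBinaryBiproducts _
  haveI : (E.functor.mapHomologicalComplex (ComplexShape.up ℤ)).IsEquivalence :=
    (E.mapHomologicalComplex (ComplexShape.up ℤ)).isEquivalence_functor
  haveI : (mapLM E.functor).functor.IsEquivalence := this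
  haveI := LocalizerMorphism.IsLocalizedEquivalence.of_equivalence (mapLM E.functor)
    (quasiIso_le_map E.functor)
  letI : CatCommSq (mapLM E.functor).functor DerivedCategory.Q DerivedCategory.Q
    E.functor.mapDerivedCategory := ⟨E.functor.mapDerivedCategoryFactors.symm⟩
  haveI : E.functor.mapDerivedCategory.IsEquivalence :=
    (mapLM E.functor).isEquivalence DerivedCategory.Q DerivedCategory.Q _
  exact ⟨E.functor.mapDerivedCategory.asEquivalence,
    Functor.instCommShiftDerivedCategoryMapDerivedCategoryInt E.functor,
    inferInstanceAs (E.functor.mapDerivedCategory.IsTriangulated)⟩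
end

section
variable (C : Type*) [Category* C] [Preadditive C]

/-- The functor sending `K` to the opposite cochain complex. -/
def Φ : (CochainComplex C ℤ)ᵒᵖ ⥤ CochainComplex Cᵒᵖ ℤ where
  obj K :=
    { X := fun n => op (K.unop.X (-n))
      d := fun i j => (K.unop.d (-j) (-i)).op
      shape := fun i j hij => by
        rw [K.unop.shape _ _ (by simp at hij ⊢; omega), op_zero]
      d_comp_d' := fun i j k _ _ => by rw [← op_comp, K.unop.d_comp_d, op_zero] }
  map f :=
    { f := fun n => (f.unop.f (-n)).op
      comm' := fun i j _ => by
        rw [← op_comp, ← op_comp, f.unop.comm] }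

def ΦIso : Φ C ≅ (CochainComplex.opEquivalence C).functor :=
  NatIso.ofComponents (fun K => HomologicalComplex.Hom.isoOfComponents (fun n => Iso.refl _)
    (fun i j _ => (Category.id_comp _).trans (Category.comp_id _).symm))
    (fun f => by
      ext n
      exact (Category.comp_id _).trans (Category.id_comp _).symm)

instance : (Φ C).IsEquivalence := Functor.isEquivalence_of_iso (ΦIso C).symm

variable {C}
@[simp] lemma Φ_obj_d (K : (CochainComplex C ℤ)ᵒᵖ) (i j : ℤ) :
    ((Φ C).obj K).d i j = (K.unop.d (-j) (-i)).op := rfl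
lemma Φ_obj_X (K : (CochainComplex C ℤ)ᵒᵖ) (i : ℤ) :
    ((Φ C).obj K).X i = op (K.unop.X (-i)) := rfl
@[simp] lemma Φ_map_f {K L : (CochainComplex C ℤ)ᵒᵖ} (f : K ⟶ L) (i : ℤ) :
    ((Φ C).map f).f i = (f.unop.f (-i)).op := rfl
end

section
variable {C : Type*} [Category* C] [Preadditive C]

lemma opIso_hom_app (K : (CochainComplex C ℤ)ᵒᵖ) (a : ℤ) :
    (shiftFunctorOpIso (CochainComplex C ℤ) a (-a) (by omega)).hom.app K = 𝟙 _ := rfl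

lemma opIso_inv_app (K : (CochainComplex C ℤ)ᵒᵖ) (a : ℤ) :
    (shiftFunctorOpIso (CochainComplex C ℤ) a (-a) (by omega)).inv.app K = 𝟙 _ := rfl

/-- the degree `i` isomorphism -/
def ΦShiftX (K : (CochainComplex C ℤ)ᵒᵖ) (a i : ℤ) :
    ((Φ C).obj (K⟦a⟧)).X i ≅ (((Φ C).obj K)⟦a⟧).X i :=
  (K.unop.XIsoOfEq (show -(i + a) = -i + -a by omega)).op

lemma ΦShiftX_hom (K : (CochainComplex C ℤ)ᵒᵖ) (a i : ℤ) :
    (ΦShiftX K a i).hom = (K.unop.XIsoOfEq (show -(i + a) = -i + -a by omega)).hom.op := rfl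

lemma Φ_shift_d (K : (CochainComplex C ℤ)ᵒᵖ) (a i j : ℤ) :
    ((Φ C).obj (K⟦a⟧)).d i j = a.negOnePow • (K.unop.d (-j + -a) (-i + -a)).op := by
  have : ((Φ C).obj (K⟦a⟧)).d i j = ((-a).negOnePow • (K.unop.d (-j + -a) (-i + -a))).op := rfl
  rw [this, Int.negOnePow_neg]
  rfl

lemma aux_d (K : CochainComplex C ℤ) (a i j : ℤ) :
    (a.negOnePow • K.d (-(j + a)) (-(i + a))) ≫
      (K.XIsoOfEq (show -(i + a) = -i + -a by omega)).hom =
    (K.XIsoOfEq (show -(j + a) = -j + -a by omega)).hom ≫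
      ((-a).negOnePow • K.d (-j + -a) (-i + -a)) := by
  simp

/-- the isomorphism at each complex -/
def ΦShift (K : (CochainComplex C ℤ)ᵒᵖ) (a : ℤ) :
    (Φ C).obj (K⟦a⟧) ≅ ((Φ C).obj K)⟦a⟧ :=
  HomologicalComplex.Hom.isoOfComponents (ΦShiftX K a)
    (fun i j _ => congrArg Quiver.Hom.op (aux_d K.unop a i j))

lemma ΦShift_hom_f (K : (CochainComplex C ℤ)ᵒᵖ) (a i : ℤ) :
    (ΦShift K a).hom.f i =
      (K.unop.XIsoOfEq (show -(i + a) = -i + -a by omega)).hom.op := rfl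

lemma shiftAdd_op (K : (CochainComplex C ℤ)ᵒᵖ) (a b : ℤ) :
    ((shiftFunctorAdd (CochainComplex C ℤ)ᵒᵖ a b).hom.app K) =
      ((shiftFunctorAdd' (CochainComplex C ℤ) (-a) (-b) (-(a + b))
        (by omega)).inv.app K.unop).op := by
  have := shiftFunctorAdd'_op_hom_app K a b _ rfl (-a) (-b)
    (-(a + b)) (by omega) (by omega) (by omega)
  rw [← shiftFunctorAdd'_eq_shiftFunctorAdd]
  refine this.trans ?_
  refine (Category.id_comp _).trans ?_
  refine Eq.trans (congrArg _ ?_) (Category.comp_id _)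
  refine (Category.id_comp _).trans ?_
  exact CategoryTheory.Functor.map_id _ _

lemma shiftAdd_op_f (K : (CochainComplex C ℤ)ᵒᵖ) (a b i : ℤ) :
    ((shiftFunctorAdd (CochainComplex C ℤ)ᵒᵖ a b).hom.app K).unop.f i =
      (K.unop.XIsoOfEq (show i + -b + -a = i + -(a + b) by omega)).hom := by
  rw [shiftAdd_op]
  exact CochainComplex.shiftFunctorAdd'_inv_app_f' K.unop (-a) (-b) (-(a + b)) (by omega) i

lemma shiftZero_op_f (K : (CochainComplex C ℤ)ᵒᵖ) (i : ℤ) :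
    ((shiftFunctorZero (CochainComplex C ℤ)ᵒᵖ ℤ).hom.app K).unop.f i =
      (K.unop.XIsoOfEq (show i = i + -0 by omega)).hom := by
  rw [shiftFunctorZero_op_hom_app]
  exact (Category.comp_id _).trans (CochainComplex.shiftFunctorZero_inv_app_f K.unop i)

lemma Φ_XIsoOfEq (K : (CochainComplex C ℤ)ᵒᵖ) {i j : ℤ} (h : i = j) :
    (((Φ C).obj K).XIsoOfEq h).hom = (K.unop.XIsoOfEq (show -j = -i by omega)).hom.op := by
  subst h
  simp
  rfl

lemma aux_nat {K L : CochainComplex C ℤ} (f : K ⟶ L) {i j : ℤ} (h : i = j) :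
    (K.XIsoOfEq h).hom ≫ f.f j = f.f i ≫ (L.XIsoOfEq h).hom := by
  subst h; simp

lemma aux_2 (K : CochainComplex C ℤ) {i j k : ℤ} (h : i = j) (h' : j = k) :
    (K.XIsoOfEq (h.trans h')).hom = (K.XIsoOfEq h).hom ≫ (K.XIsoOfEq h').hom := by
  simp

lemma aux_4 (K : CochainComplex C ℤ) {i j k l m : ℤ} (h : i = j) (h' : j = k) (h'' : k = l)
    (h''' : l = m) :
    (K.XIsoOfEq (h.trans (h'.trans (h''.trans h''')))).hom =
      (((K.XIsoOfEq h).hom ≫ (K.XIsoOfEq h').hom) ≫ (K.XIsoOfEq h'').hom) ≫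
        (K.XIsoOfEq h''').hom := by
  simp

instance ΦCommShift : (Φ C).CommShift ℤ where
  commShiftIso a := NatIso.ofComponents (fun K => ΦShift K a) (fun {K L} f => by
    ext i
    exact congrArg Quiver.Hom.op (aux_nat f.unop (show -(i + a) = -i + -a by omega)))
  commShiftIso_zero := by
    ext K i
    rw [Functor.CommShift.isoZero_hom_app]
    rw [HomologicalComplex.comp_f]
    rw [CochainComplex.shiftFunctorZero_inv_app_f, Φ_XIsoOfEq, Φ_map_f, shiftZero_op_f]
    exact congrArg Quiver.Hom.op (aux_2 K.unop (show -(i + 0) = -i by omega)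
      (show -i = -i + -0 by omega))
  commShiftIso_add a b := by
    ext K i
    rw [Functor.CommShift.isoAdd_hom_app]
    rw [HomologicalComplex.comp_f, HomologicalComplex.comp_f, HomologicalComplex.comp_f,
      CochainComplex.shiftFunctorAdd_inv_app_f]
    rw [Φ_XIsoOfEq, Φ_map_f, shiftAdd_op_f]
    exact congrArg Quiver.Hom.op (aux_4 K.unop (show -(i + (a + b)) = -(i + b + a) by omega)
      (show _ = -(i + b) + -a by omega)
      (show _ = -i + -b + -a by omega)
      (show _ = -i + -(a + b) by omega))

lemma Φ_commShiftIso_hom_app_f (K : (CochainComplex C ℤ)ᵒᵖ) (a i : ℤ) :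
    (((Φ C).commShiftIso a).hom.app K).f i =
      (K.unop.XIsoOfEq (show -(i + a) = -i + -a by omega)).hom.op := rfl

end

section
variable {C : Type*} [Category* C] [Abelian C]

lemma quasiIso_Φ_map_iff {K L : CochainComplex C ℤ} (f : K ⟶ L) :
    QuasiIso ((Φ C).map f.op) ↔ QuasiIso f := by
  have key (i : ℤ) : QuasiIsoAt ((Φ C).map f.op) i ↔ QuasiIsoAt f (-i) := by
    rw [quasiIsoAt_iff' _ (i - 1) i (i + 1) (by simp) (by simp),
      quasiIsoAt_iff' _ (-(i + 1)) (-i) (-(i - 1)) (by simp; omega) (by simp; omega)]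
    exact ShortComplex.quasiIso_opMap_iff
      ((HomologicalComplex.shortComplexFunctor' C _ (-(i + 1)) (-i) (-(i - 1))).map f)
  rw [quasiIso_iff, quasiIso_iff]
  constructor
  · intro h i
    simpa using (key (-i)).1 (h (-i))
  · intro h i
    exact (key i).2 (h (-i))

variable (C) in
/-- `Φ` as a localizer morphism. -/
def ΦLM : LocalizerMorphism (HomologicalComplex.quasiIso C (ComplexShape.up ℤ)).op
    (HomologicalComplex.quasiIso Cᵒᵖ (ComplexShape.up ℤ)) where
  functor := Φ C
  map _ _ f hf := (quasiIso_Φ_map_iff f.unop).2 hf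

instance : (ΦLM C).functor.IsEquivalence := inferInstanceAs (Φ C).IsEquivalence
instance : (ΦLM C).functor.CommShift ℤ := ΦCommShift

lemma Φ_le : HomologicalComplex.quasiIso Cᵒᵖ (ComplexShape.up ℤ) ≤
      (HomologicalComplex.quasiIso C (ComplexShape.up ℤ)).op.map (Φ C) := by
  have h : (HomologicalComplex.quasiIso C (ComplexShape.up ℤ)).op =
      (HomologicalComplex.quasiIso Cᵒᵖ (ComplexShape.up ℤ)).inverseImage (Φ C) := by
    ext K L f
    exact (quasiIso_Φ_map_iff f.unop).symm
  rw [h, MorphismProperty.map_inverseImage_eq_of_isEquivalence]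

lemma ΦLM_le : HomologicalComplex.quasiIso Cᵒᵖ (ComplexShape.up ℤ) ≤
      (HomologicalComplex.quasiIso C (ComplexShape.up ℤ)).op.map (ΦLM C).functor := Φ_le

instance : (ΦLM C).IsLocalizedEquivalence :=
  LocalizerMorphism.IsLocalizedEquivalence.of_equivalence _ ΦLM_le

end

section
universe w' u' v'

lemma isLocalization_inv_comp {C₁ C₂ D : Type*} [Category* C₁] [Category* C₂] [Category* D]
    {W₁ : MorphismProperty C₁} {W₂ : MorphismProperty C₂} (F : LocalizerMorphism W₁ W₂)
    [F.functor.IsEquivalence] (h : W₂ ≤ W₁.map F.functor)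
    (L : C₁ ⥤ D) [L.IsLocalization W₁] : (F.functor.inv ⋙ L).IsLocalization W₂ := by
  refine Functor.IsLocalization.of_equivalence_source L W₁ (F.functor.inv ⋙ L) W₂
    F.functor.asEquivalence ?_ ?_ ?_
  · intro X Y f hf
    exact W₂.le_isoClosure _ (F.map _ hf)
  · intro X Y f hf
    obtain ⟨X', Y', g, hg, ⟨e⟩⟩ := h _ hf
    have h1 : IsIso (L.map g) := Localization.inverts L W₁ g hg
    have e' : Arrow.mk (L.map g) ≅ Arrow.mk ((F.functor.inv ⋙ L).map f) :=
      ((Functor.mapArrowFunctor _ _).mapIso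
        (Functor.isoWhiskerRight F.functor.asEquivalence.unitIso L)).app (Arrow.mk g) ≪≫
          (F.functor.inv ⋙ L).mapArrow.mapIso e
    exact ((MorphismProperty.isomorphisms D).arrow_mk_iso_iff e').1 h1
  · exact (Functor.associator _ _ _).symm ≪≫
      Functor.isoWhiskerRight F.functor.asEquivalence.unitIso.symm L ≪≫ L.leftUnitor

/-- transport of a localization -/
@[reducible]
def hasLocTransport {C₁ C₂ : Type u'} [Category.{v'} C₁] [Category.{v'} C₂]
    {W₁ : MorphismProperty C₁} {W₂ : MorphismProperty C₂} (F : LocalizerMorphism W₁ W₂)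
    [F.functor.IsEquivalence] (h : W₂ ≤ W₁.map F.functor)
    [W₁.HasLocalization] : MorphismProperty.HasLocalization.{w'} W₂ :=
  letI := isLocalization_inv_comp F h W₁.Q'
  MorphismProperty.HasLocalization.mk (F.functor.inv ⋙ W₁.Q')

@[reducible]
def hasDerivedOp (C : Type u') [Category.{v'} C] [Abelian C] [HasDerivedCategory.{w'} C] :
    HasDerivedCategory.{w'} Cᵒᵖ :=
  letI : MorphismProperty.HasLocalization.{w'}
      (HomologicalComplex.quasiIso C (ComplexShape.up ℤ)).op :=
    MorphismProperty.HasLocalization.mk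
      (HomologicalComplex.quasiIso C (ComplexShape.up ℤ)).Q'.op
  hasLocTransport (ΦLM C) ΦLM_le

lemma additive_of_equiv {C D : Type*} [Category* C] [Category* D] [Abelian C] [Abelian D]
    (E : C ≌ D) : E.functor.Additive := by
  haveI : PreservesBinaryBiproducts E.functor :=
    preservesBinaryBiproducts_of_preservesBinaryProducts _
  exact Functor.additive_of_preservesBinaryBiproducts _

@[reducible]
def hasDerivedEquiv {C : Type u'} [Category.{v'} C] [Abelian C] [HasDerivedCategory.{w'} C]
    {D : Type u'} [Category.{v'} D] [Abelian D] (E : C ≌ D) :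
    HasDerivedCategory.{w'} D :=
  haveI := additive_of_equiv E
  haveI i : (E.functor.mapHomologicalComplex (ComplexShape.up ℤ)).IsEquivalence :=
    (E.mapHomologicalComplex (ComplexShape.up ℤ)).isEquivalence_functor
  haveI : (mapLM E.functor).functor.IsEquivalence := i
  hasLocTransport (mapLM E.functor) (quasiIso_le_map E.functor)

end

section
open CochainComplex CochainComplex.HomComplex
lemma shift_one_d {E : Type*} [Category* E] [Preadditive E] {N : CochainComplex E ℤ} (
    i j : ℤ) : (N⟦(1 : ℤ)⟧).d i j = - N.d (i + 1) (j + 1) := by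
  have h : (N⟦(1 : ℤ)⟧).d i j = (1 : ℤ).negOnePow • N.d (i + 1) (j + 1) := rfl
  refine h.trans ?_
  simp


variable {E : Type*} [Category* E] [Preadditive E] [HasBinaryBiproducts E]
  {N L K : CochainComplex E ℤ} (r : N ⟶ L) (g : L ⟶ K) (δ : K ⟶ N⟦(1 : ℤ)⟧)
  (sn : ∀ i, L.X i ⟶ N.X i) (il : ∀ i, N.X (i + 1) ⟶ K.X i)
  (dd : ∀ i, K.X i ⟶ N.X (i + 1))

/-- degreewise map from the cone -/
def psiX (i : ℤ) : (mappingCone g).X i ⟶ N.X (i + 1) :=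
  (mappingCone.fst g).1.v i (i + 1) rfl ≫ sn (i + 1) + (mappingCone.snd g).v i i (by omega) ≫ dd i

/-- degreewise map to the cone -/
def psiInvX (i : ℤ) : N.X (i + 1) ⟶ (mappingCone g).X i :=
  r.f (i + 1) ≫ (mappingCone.inl g).v (i + 1) i (by omega) - il i ≫ (mappingCone.inr g).f i

lemma inl_psiX (i : ℤ) :
    (mappingCone.inl g).v (i + 1) i (by omega) ≫ psiX g sn dd i = sn (i + 1) := by
  simp [psiX]

lemma inr_psiX (i : ℤ) :
    (mappingCone.inr g).f i ≫ psiX g sn dd i = dd i := by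
  simp [psiX]

lemma psi_comm
    (hd : ∀ i, dd i ≫ N.d (i + 1) (i + 1 + 1) = - K.d i (i + 1) ≫ dd (i + 1))
    (h1 : ∀ i, sn i ≫ N.d i (i + 1) = - g.f i ≫ dd i + L.d i (i + 1) ≫ sn (i + 1)) (i : ℤ) :
    psiX g sn dd i ≫ (-N.d (i + 1) (i + 1 + 1)) =
      (mappingCone g).d i (i + 1) ≫ psiX g sn dd (i + 1) := by
  rw [mappingCone.ext_from_iff g (i + 1) i rfl]
  constructor
  · rw [← Category.assoc, inl_psiX, Preadditive.comp_neg, h1,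
      mappingCone.inl_v_d_assoc g (i + 1) i (i + 1 + 1) (by omega) (by omega),
      Preadditive.sub_comp, Category.assoc, Category.assoc, inl_psiX, inr_psiX]
    simp
    abel
  · rw [← Category.assoc, inr_psiX, mappingCone.inr_f_d_assoc, inr_psiX, Preadditive.comp_neg, hd]
    simp

lemma psi_hom_inv (h2 : ∀ i, sn i ≫ r.f i = 𝟙 _) (h3 : ∀ i, dd i ≫ il i = -𝟙 _)
    (h4 : ∀ i, sn (i + 1) ≫ il i = 0) (h5 : ∀ i, dd i ≫ r.f (i + 1) = 0) (i : ℤ) :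
    psiX g sn dd i ≫ psiInvX r g il i = 𝟙 _ := by
  rw [mappingCone.ext_from_iff g (i + 1) i rfl]
  constructor
  · rw [← Category.assoc, inl_psiX, psiInvX, Preadditive.comp_sub, ← Category.assoc, h2,
      ← Category.assoc, h4]
    simp
  · rw [← Category.assoc, inr_psiX, psiInvX, Preadditive.comp_sub, ← Category.assoc, h5,
      ← Category.assoc, h3]
    simp

lemma psi_inv_hom (h6 : ∀ i, r.f (i + 1) ≫ sn (i + 1) - il i ≫ dd i = 𝟙 _) (i : ℤ) :
    psiInvX r g il i ≫ psiX g sn dd i = 𝟙 _ := by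
  rw [psiInvX, Preadditive.sub_comp, Category.assoc, Category.assoc, inl_psiX, inr_psiX, h6]

lemma rotate_iso (hδ : ∀ i, δ.f i = dd i)
    (h1 : ∀ i, sn i ≫ N.d i (i + 1) = - g.f i ≫ dd i + L.d i (i + 1) ≫ sn (i + 1))
    (h2 : ∀ i, sn i ≫ r.f i = 𝟙 _) (h3 : ∀ i, dd i ≫ il i = -𝟙 _)
    (h4 : ∀ i, sn (i + 1) ≫ il i = 0) (h5 : ∀ i, dd i ≫ r.f (i + 1) = 0)
    (h6 : ∀ i, r.f (i + 1) ≫ sn (i + 1) - il i ≫ dd i = 𝟙 _) :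
    Nonempty ((Triangle.mk r g δ).rotate ≅ mappingCone.triangle g) := by
  have hd (i : ℤ) : dd i ≫ N.d (i + 1) (i + 1 + 1) = - K.d i (i + 1) ≫ dd (i + 1) := by
    have := δ.comm i (i + 1)
    rw [shift_one_d, hδ, hδ] at this
    have h' : dd i ≫ (- N.d (i + 1) (i + 1 + 1)) = K.d i (i + 1) ≫ dd (i + 1) := this
    rw [← h', Preadditive.comp_neg, neg_neg]
  let ψ : mappingCone g ≅ N⟦(1 : ℤ)⟧ := HomologicalComplex.Hom.isoOfComponents
    (fun i => { hom := psiX g sn dd i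
                inv := psiInvX r g il i
                hom_inv_id := psi_hom_inv r g sn il dd h2 h3 h4 h5 i
                inv_hom_id := psi_inv_hom r g sn il dd h6 i })
    (fun i j hij => by
      obtain rfl : i + 1 = j := hij
      rw [shift_one_d]
      exact psi_comm g sn dd hd h1 i)
  have hψ (i : ℤ) : ψ.hom.f i = psiX g sn dd i := rfl
  refine ⟨(Triangle.isoMk (mappingCone.triangle g) (Triangle.mk r g δ).rotate
    (Iso.refl L) (Iso.refl K) ψ ?_ ?_ ?_).symm⟩
  · exact (Category.comp_id _).trans (Category.id_comp _).symm
  · refine Eq.trans ?_ (Category.id_comp _).symm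
    ext i
    refine Eq.trans ?_ (hδ i).symm
    exact inr_psiX g sn dd i
  · have h0 : (CategoryTheory.shiftFunctor (CochainComplex E ℤ) (1 : ℤ)).map (𝟙 L) = 𝟙 _ :=
      CategoryTheory.Functor.map_id _ _
    refine Eq.trans (congrArg ((mappingCone.triangle g).mor₃ ≫ ·) h0) ?_
    refine (Category.comp_id _).trans ?_
    change (mappingCone.triangle g).mor₃ = ψ.hom ≫ (-(r⟦(1 : ℤ)⟧'))
    ext i
    have e : psiX g sn dd i ≫ (-(r.f (i + 1))) = - (psiX g sn dd i ≫ r.f (i + 1)) :=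
      Preadditive.comp_neg _ _
    refine (mappingCone.ext_from_iff g (i + 1) i rfl (A := L.X (i + 1)) _ _).2 ⟨?_, ?_⟩
    · refine (mappingCone.inl_v_triangle_mor₃_f g (i + 1) i (by omega)).trans ?_
      have e1 : (mappingCone.inl g).v (i + 1) i (by omega) ≫ psiX g sn dd i ≫ (-(r.f (i + 1))) =
          - 𝟙 (L.X (i + 1)) := by
        rw [e, Preadditive.comp_neg, ← Category.assoc, inl_psiX, h2]
      exact e1.symm
    · refine (mappingCone.inr_f_triangle_mor₃_f g i).trans ?_
      have e1 : (mappingCone.inr g).f i ≫ psiX g sn dd i ≫ (-(r.f (i + 1))) = 0 := by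
        rw [e, Preadditive.comp_neg, ← Category.assoc, inr_psiX, h5, neg_zero]
      exact e1.symm
end

section
open CochainComplex CochainComplex.HomComplex
variable {C : Type*} [Category* C] [Preadditive C] [HasBinaryBiproducts C]
  {K L : CochainComplex C ℤ} (f : K ⟶ L)

lemma mor₃_XIso (p q : ℤ) (h : p + 1 = q) :
    (mappingCone.triangle f).mor₃.f p ≫ (K.XIsoOfEq h).hom =
      -(mappingCone.fst f).1.v p q h := by
  subst h
  refine (Category.comp_id _).trans ?_
  refine (mappingCone.ext_from_iff f (p + 1) p rfl (A := K.X (p + 1)) _ _).2 ⟨?_, ?_⟩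
  · refine (mappingCone.inl_v_triangle_mor₃_f f (p + 1) p (by omega)).trans ?_
    have e1 : (mappingCone.inl f).v (p + 1) p (by omega) ≫
        (-(mappingCone.fst f).1.v p (p + 1) rfl) = - 𝟙 (K.X (p + 1)) := by
      rw [Preadditive.comp_neg, mappingCone.inl_v_fst_v]
    exact e1.symm
  · refine (mappingCone.inr_f_triangle_mor₃_f f p).trans ?_
    have e1 : (mappingCone.inr f).f p ≫
        (-(mappingCone.fst f).1.v p (p + 1) rfl) = 0 := by
      rw [Preadditive.comp_neg, mappingCone.inr_f_fst_v, neg_zero]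
    exact e1.symm

lemma compIsoId_f (n : ℤ) :
    ((shiftFunctorCompIsoId (CochainComplex C ℤ) (1 : ℤ) (-1) (by omega)).hom.app K).f n =
      (K.XIsoOfEq (show n + -1 + 1 = n by omega)).hom := by
  rw [shiftFunctorCompIsoId]
  refine (congrArg₂ (· ≫ ·) (shiftFunctorAdd'_inv_app_f' K 1 (-1) 0 (by omega) n)
    (shiftFunctorZero_hom_app_f K n)).trans ?_
  exact (aux_2 K (show n + -1 + 1 = n + 0 by omega) (show n + 0 = n by omega)).symm

/-- the opposite triangle -/
abbrev opTri : Triangle (CochainComplex Cᵒᵖ ℤ) :=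
  (Φ C).mapTriangle.obj ((triangleOpEquivalence _).functor.obj (op (mappingCone.triangle f)))

lemma opTri_mor₃_f (i : ℤ) : (opTri f).mor₃.f i =
    (-(mappingCone.fst f).1.v (-(i + 1)) (-i) (by omega)).op := by
  have h1 : (opTri f).mor₃.f i =
      (((mappingCone f).XIsoOfEq (show -(i + 1) = -i + -1 by omega)).hom ≫
        (mappingCone.triangle f).mor₃.f (-i + -1) ≫
        ((shiftFunctorCompIsoId (CochainComplex C ℤ) (1 : ℤ) (-1) (by omega)).hom.app K).f
          (-i)).op := by
    have hc : (opShiftFunctorEquivalence (CochainComplex C ℤ) 1).counitIso.inv.app (op K) =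
      ((shiftFunctorCompIsoId (CochainComplex C ℤ) (1 : ℤ) (-1) (by omega)).hom.app K).op :=
      (opShiftFunctorEquivalence_counitIso_inv_app (op K) 1 (-1) (by omega)).trans
        (Category.comp_id _)
    change (((Φ C).map ((opShiftFunctorEquivalence (CochainComplex C ℤ) 1).counitIso.inv.app (op K)
      ≫ (mappingCone.triangle f).mor₃.op⟦(1 : ℤ)⟧')) ≫
        ((Φ C).commShiftIso (1 : ℤ)).hom.app (op (mappingCone f))).f i = _
    rw [hc]
    rfl
  rw [h1, compIsoId_f]
  congr 1
  have h2 := aux_nat (mappingCone.triangle f).mor₃ (show -(i + 1) = -i + -1 by omega)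
  rw [← mor₃_XIso]
  refine (Category.assoc _ _ _).symm.trans ?_
  refine (congrArg (· ≫ (K.XIsoOfEq (show -i + -1 + 1 = -i by omega)).hom) h2).trans ?_
  refine (Category.assoc _ _ _).trans ?_
  congr 1
  exact (aux_2 K (show -(i + 1) + 1 = -i + -1 + 1 by omega)
    (show -i + -1 + 1 = -i by omega)).symm

lemma opTri_rotate :
    Nonempty ((opTri f).rotate ≅ mappingCone.triangle ((Φ C).map f.op)) := by
  refine rotate_iso (N := (Φ C).obj (op (mappingCone f))) (L := (Φ C).obj (op L))
    (K := (Φ C).obj (op K)) ((Φ C).map (mappingCone.inr f).op) ((Φ C).map f.op) (opTri f).mor₃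
    (fun i => ((mappingCone.snd f).v (-i) (-i) (by omega)).op)
    (fun i => ((mappingCone.inl f).v (-i) (-(i + 1)) (by omega)).op)
    (fun i => (-(mappingCone.fst f).1.v (-(i + 1)) (-i) (by omega)).op)
    (opTri_mor₃_f f) ?_ ?_ ?_ ?_ ?_ ?_
  · intro i
    have := mappingCone.d_snd_v f (-(i + 1)) (-i) (by omega)
    refine (congrArg Quiver.Hom.op this).trans (congrArg Quiver.Hom.op ?_)
    change _ = - ((-(mappingCone.fst f).1.v (-(i + 1)) (-i) (by omega)) ≫ f.f (-i)) +
      (mappingCone.snd f).v (-(i + 1)) (-(i + 1)) (by omega) ≫ L.d (-(i + 1)) (-i)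
    simp
  · intro i
    exact congrArg Quiver.Hom.op (mappingCone.inr_f_snd_v f (-i))
  · intro i
    refine congrArg Quiver.Hom.op
      (a₁ := (mappingCone.inl f).v (-i) (-(i + 1)) (by omega) ≫
        (-(mappingCone.fst f).1.v (-(i + 1)) (-i) (by omega))) (a₂ := -𝟙 _) ?_
    simp
    rfl
  · intro i
    refine congrArg Quiver.Hom.op
      (a₁ := (mappingCone.inl f).v (-i) (-(i + 1)) (by omega) ≫
        ((mappingCone.snd f).v (-(i + 1)) (-(i + 1)) (by omega))) (a₂ := 0) ?_
    simp
  · intro i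
    refine congrArg Quiver.Hom.op
      (a₁ := (mappingCone.inr f).f (-(i + 1)) ≫
        (-(mappingCone.fst f).1.v (-(i + 1)) (-i) (by omega))) (a₂ := 0) ?_
    simp
  · intro i
    refine congrArg Quiver.Hom.op
      (a₁ := (mappingCone.snd f).v (-(i + 1)) (-(i + 1)) (by omega) ≫
          (mappingCone.inr f).f (-(i + 1)) -
        (-(mappingCone.fst f).1.v (-(i + 1)) (-i) (by omega)) ≫
          (mappingCone.inl f).v (-i) (-(i + 1)) (by omega)) (a₂ := 𝟙 _) ?_
    rw [Preadditive.neg_comp, sub_neg_eq_add]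
    exact (add_comm _ _).trans (mappingCone.id_X f (-(i + 1)) (-i) (by omega))
end

section
variable (C : Type*) [Category* C] [Abelian C] [HasDerivedCategory C] [HasDerivedCategory Cᵒᵖ]

lemma Q_opTri_distinguished {K L : CochainComplex C ℤ} (f : K ⟶ L) :
    (DerivedCategory.Q (C := Cᵒᵖ)).mapTriangle.obj (opTri f) ∈
      distTriang (DerivedCategory Cᵒᵖ) := by
  rw [Pretriangulated.rotate_distinguished_triangle]
  obtain ⟨e⟩ := opTri_rotate f
  rw [DerivedCategory.mem_distTriang_iff]
  exact ⟨_, _, (Φ C).map f.op, ⟨(DerivedCategory.Q (C := Cᵒᵖ)).mapTriangleRotateIso.app _ ≪≫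
    DerivedCategory.Q.mapTriangle.mapIso e⟩⟩

lemma TE.derivedOp : TE (DerivedCategory C)ᵒᵖ (DerivedCategory Cᵒᵖ) := by
  let L₁ : (CochainComplex C ℤ)ᵒᵖ ⥤ (DerivedCategory C)ᵒᵖ := (DerivedCategory.Q (C := C)).op
  let L₂ := DerivedCategory.Q (C := Cᵒᵖ)
  letI : L₁.CommShift ℤ := inferInstanceAs ((DerivedCategory.Q (C := C)).op.CommShift ℤ)
  haveI : L₁.IsLocalization (HomologicalComplex.quasiIso C (ComplexShape.up ℤ)).op :=
    inferInstanceAs ((DerivedCategory.Q (C := C)).op.IsLocalization _)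
  let G := (ΦLM C).localizedFunctor L₁ L₂
  haveI : G.IsEquivalence := (ΦLM C).isEquivalence L₁ L₂ G
  let e : (ΦLM C).functor ⋙ L₂ ≅ L₁ ⋙ G := CatCommSq.iso ((ΦLM C).functor) L₁ L₂ G
  letI : G.CommShift ℤ := (ΦLM C).commShift ℤ L₁ L₂ G e
  haveI : NatTrans.CommShift e.hom ℤ := (ΦLM C).natTransCommShift_hom L₁ L₂ G e
  refine ⟨G.asEquivalence, inferInstanceAs (G.CommShift ℤ), ?_⟩
  change G.IsTriangulated
  constructor
  intro T hT
  rw [mem_distTriang_op_iff'] at hT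
  obtain ⟨T', hT', ⟨i⟩⟩ := hT
  rw [DerivedCategory.mem_distTriang_iff] at hT'
  obtain ⟨K, L, f, ⟨j⟩⟩ := hT'
  refine isomorphic_distinguished _ (Q_opTri_distinguished C f) _ ?_
  let S := (triangleOpEquivalence _).functor.obj (Opposite.op (CochainComplex.mappingCone.triangle f))
  have i1 : T ≅ L₁.mapTriangle.obj S :=
    i ≪≫ (triangleOpEquivalence _).functor.mapIso j.symm.op ≪≫
      (DerivedCategory.Q (C := C)).mapTriangleOpCompTriangleOpEquivalenceFunctorApp _
  exact G.mapTriangle.mapIso i1 ≪≫ (Functor.mapTriangleCompIso L₁ G).symm.app S ≪≫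
    (Functor.mapTriangleIso e).symm.app S ≪≫ (Functor.mapTriangleCompIso (ΦLM C).functor L₂).app S
end

/-- The equivalence between the opposite of diagrams on the dual and diagrams in the opposite. -/
def diagOp (X : Type*) [PartialOrder X] (A : Type*) [Category* A] :
    (Xᵒᵈ ⥤ A)ᵒᵖ ≌ (X ⥤ Aᵒᵖ) :=
  (Functor.opUnopEquiv Xᵒᵈ A).trans
    (((orderDualEquivalence X).op.trans (opOpEquivalence X)).congrLeft)

/-- Universal derived equivalence passes to opposite posets. -/
theorem main (X Y : Type*) [PartialOrder X] [PartialOrder Y]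
    (h : UniversallyDerivedEquivalent.{u, v, w} X Y) :
    UniversallyDerivedEquivalent.{u, v, w} Xᵒᵈ Yᵒᵈ := by
  intro A _ _ _ _
  letI := hasDerivedOp (Xᵒᵈ ⥤ A)
  letI := hasDerivedOp (Yᵒᵈ ⥤ A)
  letI := hasDerivedEquiv (diagOp X A)
  letI := hasDerivedEquiv (diagOp Y A)
  have h1 : TE (DerivedCategory (X ⥤ Aᵒᵖ)) (DerivedCategory (Y ⥤ Aᵒᵖ)) :=
    h Aᵒᵖ inferInstance inferInstance inferInstance inferInstance
  have hX := (TE.derivedOp (Xᵒᵈ ⥤ A)).trans (TE.mapDerived (diagOp X A))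
  have hY := (TE.derivedOp (Yᵒᵈ ⥤ A)).trans (TE.mapDerived (diagOp Y A))
  exact ((hX.trans h1).trans hY.symm).of_op

end UDEOp

end

/-- Universal derived equivalence passes to opposite posets. -/
theorem stmt_11 (X Y : Type*) [PartialOrder X] [PartialOrder Y]
    (h : UniversallyDerivedEquivalent.{u, v, w} X Y) :
    UniversallyDerivedEquivalent.{u, v, w} Xᵒᵈ Yᵒᵈ := by
  exact UDEOp.main X Y h
end

section
/- Let A be an abelian category and K = (K₁ →^{r₁₂} K₂) an object of C(A)^{1→2}. Define R⁻(K) = (cone(K₁ → K₂) → K₁[1]) using the canonical projection, and R⁺(K) = (K₂ → cone(K₁ → K₂)) using the canonical inclusion. Then there is a morphism of diagrams of complexes ε(K) : R⁺(R⁻(K)) → K[1], natural in K, which is a pointwise quasi-isomorphism (i.e., a quasi-isomorphism at both vertices 1 and 2). -/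
open CategoryTheory CochainComplex
open HomComplex Category

namespace RefFun
open mappingCone
section
variable {A : Type*} [Category A] [Abelian A] {F G F' G' : CochainComplex A ℤ} (φ : F ⟶ G)
  (φ' : F' ⟶ G') (uF : Cocycle F F' (-1)) (vF : Cocycle F' F 1)
  (uG : Cocycle G G' (-1)) (vG : Cocycle G' G 1)
  (uvF : uF.1.comp vF.1 (neg_add_cancel 1) = Cochain.ofHom (𝟙 F))
  (vuF : vF.1.comp uF.1 (add_neg_cancel 1) = Cochain.ofHom (𝟙 F'))
  (uvG : uG.1.comp vG.1 (neg_add_cancel 1) = Cochain.ofHom (𝟙 G))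
  (vuG : vG.1.comp uG.1 (add_neg_cancel 1) = Cochain.ofHom (𝟙 G'))
  (hφ : uF.1.comp (Cochain.ofHom φ') (add_zero (-1)) = (Cochain.ofHom φ).comp uG.1 (zero_add (-1)))
  (hφ' : vF.1.comp (Cochain.ofHom φ) (add_zero 1) = (Cochain.ofHom φ').comp vG.1 (zero_add 1))
  (p : mappingCone φ ⟶ F')
  (hp : Cochain.ofHom p = -(fst φ).1.comp uF.1 (add_neg_cancel 1))

include hφ hp in
lemma e_aux : δ (-1) 0 (-(snd φ).comp uG.1 (zero_add (-1))) = Cochain.ofHom (p ≫ φ') := by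
  rw [Cochain.ofHom_comp, hp, Cochain.neg_comp, δ_neg, δ_zero_cochain_comp _ _ _ (neg_add_cancel 1), δ_snd,
    Cocycle.δ_eq_zero, Cochain.comp_assoc_of_third_is_zero_cochain, hφ]
  simp

noncomputable def e : mappingCone p ⟶ G' :=
  desc p (-(snd φ).comp uG.1 (zero_add (-1))) φ' (e_aux φ φ' uF uG hφ p hp)

include hp in
lemma g_aux : δ 0 1 (0 : Cochain G' F' 0) +
    (-(vG.1.comp (Cochain.ofHom (inr φ)) (add_zero 1))).comp (Cochain.ofHom p) (add_zero 1) = 0 := by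
  simp [hp]

noncomputable def vinr : Cocycle G' (mappingCone φ) 1 :=
  Cocycle.mk (-(vG.1.comp (Cochain.ofHom (inr φ)) (add_zero 1))) 2 (by simp) (by
    simp)

noncomputable def g : G' ⟶ mappingCone p :=
  lift p (vinr φ vG) 0 (g_aux φ uF vG p hp)

include vuG in
lemma g_e : g φ uF vG p hp ≫ e φ φ' uF uG hφ p hp = 𝟙 _ := by
  ext n
  have := Cochain.congr_v vuG n n (add_zero n)
  simp [Cochain.comp_v _ _ (add_neg_cancel 1) n (n + 1) n rfl (by lia)] at this
  simp [g, e, vinr, lift_desc_f _ _ _ _ _ _ _ _ _ rfl, this]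

lemma inl_e_f (n : ℤ) : (inl p).v (n + 1) n (by lia) ≫ (e φ φ' uF uG hφ p hp).f n =
    -(snd φ).v (n + 1) (n + 1) (add_zero _) ≫ uG.1.v (n + 1) n (by lia) := by
  simp [e]

lemma inr_e_f (n : ℤ) : (inr p).f n ≫ (e φ φ' uF uG hφ p hp).f n = φ'.f n := by
  simp [e]

lemma g_f (n : ℤ) : (g φ uF vG p hp).f n =
    -vG.1.v n (n + 1) rfl ≫ (inr φ).f (n + 1) ≫ (inl p).v (n + 1) n (by lia) := by
  simp [g, vinr, lift_f _ _ _ _ _ (n + 1) rfl]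

include uvF uvG hp in
lemma h1_aux : (inl p).comp (Cochain.ofHom (e φ φ' uF uG hφ p hp ≫ g φ uF vG p hp))
      (add_zero (-1)) =
    δ (-2) (-1) (0 : Cochain (mappingCone φ) (mappingCone p) (-2)) + (Cochain.ofHom p).comp
      ((vF.1.comp (inl φ) (add_neg_cancel 1)).comp (inl p) (zero_add (-1))) (zero_add (-1)) +
    (inl p).comp (Cochain.ofHom (𝟙 (mappingCone p))) (add_zero (-1)) := by
  ext a b hab
  obtain rfl : a = b + 1 := by lia
  have hp' := Cochain.congr_v hp (b + 1) (b + 1) (by lia)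
  have hF := Cochain.congr_v uvF (b + 1 + 1) (b + 1 + 1) (by lia)
  have hG := Cochain.congr_v uvG (b + 1) (b + 1) (by lia)
  have hid := id_X φ (b + 1) (b + 1 + 1) rfl
  simp [Cochain.comp_v _ _ (add_neg_cancel 1) (b + 1) (b + 1 + 1) (b + 1) rfl (by lia),
    Cochain.comp_v _ _ (neg_add_cancel 1) (b + 1) b (b + 1) (by lia) (by lia),
    Cochain.comp_v _ _ (neg_add_cancel 1) (b + 1 + 1) (b + 1) (b + 1 + 1) (by lia) (by lia)]
    at hp' hF hG
  simp [reassoc_of% (inl_e_f φ φ' uF uG hφ p hp), g_f, hp', reassoc_of% hG,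
    Cochain.comp_v _ _ (add_neg_cancel 1) (b + 1) (b + 1 + 1) (b + 1) rfl (by lia),
    reassoc_of% hF]
  conv_rhs => enter [2]; rw [← id_comp ((inl p).v _ _ _)]
  rw [← hid]
  simp

include vuF hφ' in
lemma h2_aux : Cochain.ofHom (inr p ≫ e φ φ' uF uG hφ p hp ≫ g φ uF vG p hp) =
    δ (-1) 0 ((vF.1.comp (inl φ) (add_neg_cancel 1)).comp (inl p) (zero_add (-1))) +
      Cochain.ofHom (inr p ≫ 𝟙 _) := by
  rw [δ_zero_cochain_comp _ _ _ (neg_add_cancel 1), δ_inl,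
    δ_comp _ _ (add_neg_cancel 1) 2 0 1 (by lia) (by lia) (by lia), δ_inl, Cocycle.δ_eq_zero]
  ext b
  have hp' := Cochain.congr_v hp b b (by lia)
  have hF := Cochain.congr_v vuF b b (by lia)
  have hc := Cochain.congr_v hφ' b (b + 1) (by lia)
  simp [Cochain.comp_v _ _ (add_neg_cancel 1) b (b + 1) b rfl (by lia)] at hp' hF hc
  simp [reassoc_of% (inr_e_f φ φ' uF uG hφ p hp), g_f, hp', reassoc_of% hF, reassoc_of% hc,
    Cochain.comp_v _ _ (add_neg_cancel 1) b (b + 1) b rfl (by lia)]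

noncomputable def equ : HomotopyEquiv (mappingCone p) G' where
  hom := e φ φ' uF uG hφ p hp
  inv := g φ uF vG p hp
  homotopyHomInvId := descHomotopy p _ _ 0
      ((vF.1.comp (inl φ) (add_neg_cancel 1)).comp (inl p) (zero_add (-1)))
      (h1_aux φ φ' uF vF uG vG uvF uvG hφ p hp)
      (by simpa only [assoc] using h2_aux φ φ' uF vF uG vG vuF hφ hφ' p hp)
  homotopyInvHomId := Homotopy.ofEq (g_e φ φ' uF uG vG vuG hφ p hp)

include uvF vuF uvG vuG hφ' in
lemma quasiIso_e : QuasiIso (e φ φ' uF uG hφ p hp) :=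
  (equ φ φ' uF vF uG vG uvF vuF uvG vuG hφ hφ' p hp).quasiIso_hom
end

section
variable {A : Type*} [Category A] [Abelian A] {F G F' G' F₁ G₁ F₁' G₁' : CochainComplex A ℤ}
  (φ : F ⟶ G) (φ' : F' ⟶ G') (uF : Cocycle F F' (-1)) (uG : Cocycle G G' (-1))
  (hφ : uF.1.comp (Cochain.ofHom φ') (add_zero (-1)) = (Cochain.ofHom φ).comp uG.1 (zero_add (-1)))
  (p : mappingCone φ ⟶ F')
  (hp : Cochain.ofHom p = -(fst φ).1.comp uF.1 (add_neg_cancel 1))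
  (ψ : F₁ ⟶ G₁) (ψ' : F₁' ⟶ G₁') (uF₁ : Cocycle F₁ F₁' (-1)) (uG₁ : Cocycle G₁ G₁' (-1))
  (hψ : uF₁.1.comp (Cochain.ofHom ψ') (add_zero (-1)) =
    (Cochain.ofHom ψ).comp uG₁.1 (zero_add (-1)))
  (p₁ : mappingCone ψ ⟶ F₁')
  (hp₁ : Cochain.ofHom p₁ = -(fst ψ).1.comp uF₁.1 (add_neg_cancel 1))
  (a : F ⟶ F₁) (b : G ⟶ G₁) (comm : φ ≫ b = a ≫ ψ)
  (a' : F' ⟶ F₁') (b' : G' ⟶ G₁') (comm' : φ' ≫ b' = a' ≫ ψ')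
  (hb : uG.1.comp (Cochain.ofHom b') (add_zero (-1)) = (Cochain.ofHom b).comp uG₁.1 (zero_add (-1)))
  (hpp : p ≫ a' = mappingCone.map φ ψ a b comm ≫ p₁)

include hb comm' in
lemma e_nat : mappingCone.map p p₁ (mappingCone.map φ ψ a b comm) a' hpp ≫
    e ψ ψ' uF₁ uG₁ hψ p₁ hp₁ = e φ φ' uF uG hφ p hp ≫ b' := by
  ext n
  have h1 := Cochain.congr_v hb (n + 1) n (by lia)
  have h2 := HomologicalComplex.congr_hom comm' n
  simp only [Cochain.comp_zero_cochain_v, Cochain.zero_cochain_comp_v, Cochain.ofHom_v,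
    HomologicalComplex.comp_f] at h1 h2
  have h3 : (mappingCone.map φ ψ a b comm).f (n + 1) ≫ (snd ψ).v (n + 1) (n + 1) (add_zero _) =
      (snd φ).v (n + 1) (n + 1) (add_zero _) ≫ b.f (n + 1) := by
    simp [ext_from_iff _ (n + 1 + 1) (n + 1) rfl, mappingCone.map]
  rw [ext_from_iff _ (n + 1) n rfl]
  generalize mappingCone.map φ ψ a b comm = m at *
  constructor
  · simp [mappingCone.map, e, h1, reassoc_of% h3]
  · simp [mappingCone.map, e, h2]
end

section
variable {A : Type*} [Category A] [Abelian A]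

noncomputable def u (F : CochainComplex A ℤ) : Cocycle F (F⟦(1 : ℤ)⟧) (-1) :=
  (Cocycle.ofHom (𝟙 F)).rightShift 1 (-1) (by simp)

noncomputable def v (F : CochainComplex A ℤ) : Cocycle (F⟦(1 : ℤ)⟧) F 1 :=
  (Cocycle.ofHom (𝟙 (F⟦(1 : ℤ)⟧))).rightUnshift 1 (by simp)

lemma u_v (F : CochainComplex A ℤ) (a b : ℤ) (h : a + (-1) = b) :
    (u F).1.v a b h = (F.shiftFunctorObjXIso 1 b a (by lia)).inv := by
  simp [u, Cochain.rightShift_v _ 1 (-1) _ a b h a (add_zero a)]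

lemma v_v (F : CochainComplex A ℤ) (a b : ℤ) (h : a + 1 = b) :
    (v F).1.v a b h = (F.shiftFunctorObjXIso 1 a b h.symm).hom := by
  simp [v, Cochain.rightUnshift_v _ 1 _ a b h a (add_zero a)]

lemma uv (F : CochainComplex A ℤ) :
    (u F).1.comp (v F).1 (neg_add_cancel 1) = Cochain.ofHom (𝟙 F) := by
  ext n
  rw [Cochain.comp_v _ _ (neg_add_cancel 1) n (n - 1) n (by lia) (by lia), u_v, v_v]
  simp

lemma vu (F : CochainComplex A ℤ) :
    (v F).1.comp (u F).1 (add_neg_cancel 1) = Cochain.ofHom (𝟙 (F⟦(1 : ℤ)⟧)) := by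
  ext n
  rw [Cochain.comp_v _ _ (add_neg_cancel 1) n (n + 1) n (by lia) (by lia), u_v, v_v]
  simp

variable {F G : CochainComplex A ℤ} (φ : F ⟶ G)

lemma u_nat : (u F).1.comp (Cochain.ofHom (φ⟦(1 : ℤ)⟧')) (add_zero (-1)) =
    (Cochain.ofHom φ).comp (u G).1 (zero_add (-1)) := by
  ext a b h
  obtain rfl : a = b + 1 := by lia
  simp [u_v, shiftFunctorObjXIso]

lemma v_nat : (v F).1.comp (Cochain.ofHom φ) (add_zero 1) =
    (Cochain.ofHom (φ⟦(1 : ℤ)⟧')).comp (v G).1 (zero_add 1) := by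
  ext a b h
  obtain rfl : b = a + 1 := by lia
  simp [v_v, shiftFunctorObjXIso]

noncomputable def pr : mappingCone φ ⟶ F⟦(1 : ℤ)⟧ := (triangle φ).mor₃

lemma ofHom_pr : Cochain.ofHom (pr φ) = -(fst φ).1.comp (u F).1 (add_neg_cancel 1) := by
  ext n
  simp [pr, triangle, Cochain.rightShift_v _ 1 0 _ n n _ (n + 1) rfl,
    Cochain.comp_v _ _ (add_neg_cancel 1) n (n + 1) n (by lia) (by lia), u_v]
  erw [comp_id]

noncomputable def eps : mappingCone (pr φ) ⟶ G⟦(1 : ℤ)⟧ :=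
  e φ (φ⟦(1 : ℤ)⟧') (u F) (u G) (u_nat φ) (pr φ) (ofHom_pr φ)

lemma quasiIso_eps : QuasiIso (eps φ) :=
  quasiIso_e φ _ (u F) (v F) (u G) (v G) (uv F) (vu F) (uv G) (vu G) _ (v_nat φ) _ _

lemma inr_eps : inr (pr φ) ≫ eps φ = φ⟦(1 : ℤ)⟧' := by
  simp [eps, e]

variable {F' G' : CochainComplex A ℤ} (ψ : F' ⟶ G') (a : F ⟶ F') (b : G ⟶ G')
    (comm : φ ≫ b = a ≫ ψ)

lemma pr_nat : pr φ ≫ a⟦(1 : ℤ)⟧' = mappingCone.map φ ψ a b comm ≫ pr ψ :=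
  (triangleMap φ ψ a b comm).comm₃

lemma eps_nat : mappingCone.map _ _ (mappingCone.map φ ψ a b comm) (a⟦(1:ℤ)⟧')
      (pr_nat φ ψ a b comm) ≫ eps ψ = eps φ ≫ b⟦(1:ℤ)⟧' :=
  e_nat _ _ _ _ _ _ _ _ _ _ _ _ _ _ _ _ _ _ _
    (by rw [← Functor.map_comp, ← Functor.map_comp, comm]) (u_nat b) _

noncomputable def Rm : Arrow (CochainComplex A ℤ) ⥤ Arrow (CochainComplex A ℤ) where
  obj K := Arrow.mk (pr K.hom)
  map {K L} f := Arrow.homMk (mappingCone.map K.hom L.hom f.left f.right f.w.symm)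
    (f.left⟦(1 : ℤ)⟧') (pr_nat _ _ _ _ _).symm
  map_id K := by
    ext1
    · exact map_id K.hom
    · exact (CategoryTheory.shiftFunctor (CochainComplex A ℤ) (1 : ℤ)).map_id _
  map_comp {K L M} f g := by
    ext1
    · exact map_comp K.hom L.hom M.hom _ _ f.w.symm _ _ g.w.symm
    · exact (CategoryTheory.shiftFunctor (CochainComplex A ℤ) (1 : ℤ)).map_comp _ _

noncomputable def Rp : Arrow (CochainComplex A ℤ) ⥤ Arrow (CochainComplex A ℤ) where
  obj K := Arrow.mk (inr K.hom)
  map {K L} f := Arrow.homMk f.right (mappingCone.map K.hom L.hom f.left f.right f.w.symm)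
    (by simp [mappingCone.map])
  map_id K := by
    ext1
    · rfl
    · exact map_id K.hom
  map_comp {K L M} f g := by
    ext1
    · rfl
    · exact map_comp K.hom L.hom M.hom _ _ f.w.symm _ _ g.w.symm

noncomputable def epsilon : Rm ⋙ Rp ⟶
    (CategoryTheory.shiftFunctor (CochainComplex A ℤ) (1 : ℤ)).mapArrow where
  app K := Arrow.homMk (𝟙 (K.left⟦(1 : ℤ)⟧)) (eps K.hom)
    ((id_comp _).trans (inr_eps K.hom).symm)
  naturality K L f := by
    ext1
    · exact (comp_id _).trans (id_comp _).symm
    · exact eps_nat _ _ _ _ f.w.symm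
end
end RefFun

/-- For `K = (K₁ → K₂)` in `C(A)^{1→2}`, let `R⁻(K) = (cone(K₁→K₂) → K₁[1])` (canonical
projection) and `R⁺(L) = (L₂ → cone(L₁→L₂))` (canonical inclusion). There is a morphism
`ε(K) : R⁺(R⁻(K)) → K[1]`, natural in `K`, which is a quasi-isomorphism at both vertices. -/
theorem stmt_15 (A : Type*) [Category A] [Abelian A] :
    ∃ (Rm Rp : Arrow (CochainComplex A ℤ) ⥤ Arrow (CochainComplex A ℤ))
      (_ : ∀ K : Arrow (CochainComplex A ℤ),
        Rm.obj K = Arrow.mk ((mappingCone.triangle K.hom).mor₃))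
      (_ : ∀ K : Arrow (CochainComplex A ℤ),
        Rp.obj K = Arrow.mk (mappingCone.inr K.hom))
      (ε : Rm ⋙ Rp ⟶
        (CategoryTheory.shiftFunctor (CochainComplex A ℤ) (1 : ℤ)).mapArrow),
      ∀ K : Arrow (CochainComplex A ℤ),
        QuasiIso ((ε.app K).left) ∧ QuasiIso ((ε.app K).right) := by
  refine ⟨RefFun.Rm, RefFun.Rp, fun _ => rfl, fun _ => rfl, RefFun.epsilon, fun K => ⟨?_, ?_⟩⟩
  · exact (inferInstance : QuasiIso (𝟙 (K.left⟦(1 : ℤ)⟧)))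
  · exact RefFun.quasiIso_eps K.hom
end
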